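/- arXiv:2603.21671 — 2 statements merged into one kernel-verified Lean document; each statement's English description precedes it below -/
import Mathlib

section
/- Let f : ℝ^d → ℝ be a convex function and suppose μ_{ij} (1 ≤ i,j ≤ d) are locally finite Borel measures (signed for i ≠ j) on ℝ^d satisfying ∫_{ℝ^d} φ dμ_{ij} = ∫_{ℝ^d} f(x) ∂_i∂_j φ(x) dx for every φ ∈ C_c^∞(ℝ^d). Let Q_{ij}(x) = dμ_{ij}/dx denote the Radon–Nikodym derivative of the absolutely continuous part of μ_{ij} with respect to Lebesgue measure. Then for Lebesgue-almost every x ∈ ℝ^d the matrix Q(x) = (Q_{ij}(x))_{ij} is positive semidefinite. -/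
open MeasureTheory Filter Metric
open scoped Topology ENNReal NNReal RealInnerProductSpace

noncomputable def secondPartial (d : ℕ) (φ : EuclideanSpace ℝ (Fin d) → ℝ)
    (i j : Fin d) (x : EuclideanSpace ℝ (Fin d)) : ℝ :=
  fderiv ℝ (fun z => fderiv ℝ φ z (EuclideanSpace.single j 1)) x (EuclideanSpace.single i 1)

/-- `μp, μn` represent the (signed) second derivative measures `μ_{ij} = μp i j - μn i j`
of the convex function `f`. -/
def IsSecondDerivMeasures (d : ℕ) (f : EuclideanSpace ℝ (Fin d) → ℝ)
    (μp μn : Fin d → Fin d → Measure (EuclideanSpace ℝ (Fin d))) : Prop :=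
  (∀ i j, IsLocallyFiniteMeasure (μp i j)) ∧ (∀ i j, IsLocallyFiniteMeasure (μn i j)) ∧
  ∀ i j, ∀ φ : EuclideanSpace ℝ (Fin d) → ℝ, ContDiff ℝ (⊤ : ℕ∞) φ → HasCompactSupport φ →
    (∫ x, φ x ∂(μp i j)) - (∫ x, φ x ∂(μn i j)) = ∫ x, f x * secondPartial d φ i j x

/-- the matrix of Radon–Nikodym derivatives of the absolutely continuous parts. -/
noncomputable def densityMatrix (d : ℕ)
    (μp μn : Fin d → Fin d → Measure (EuclideanSpace ℝ (Fin d)))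
    (x : EuclideanSpace ℝ (Fin d)) : Matrix (Fin d) (Fin d) ℝ :=
  Matrix.of fun i j =>
    ((μp i j).rnDeriv volume x).toReal - ((μn i j).rnDeriv volume x).toReal


theorem measure_le_of_test {d : ℕ} (A B : Measure (EuclideanSpace ℝ (Fin d)))
    [IsLocallyFiniteMeasure A] [IsLocallyFiniteMeasure B]
    (h : ∀ φ : EuclideanSpace ℝ (Fin d) → ℝ, ContDiff ℝ (⊤ : ℕ∞) φ → HasCompactSupport φ →
      (∀ x, 0 ≤ φ x) → ∫ x, φ x ∂B ≤ ∫ x, φ x ∂A) : B ≤ A := by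
  have hK : ∀ K U : Set (EuclideanSpace ℝ (Fin d)), IsCompact K → IsOpen U → K ⊆ U →
      B K ≤ A U := by
    intro K U hK hU hKU
    obtain ⟨V, hVo, hKV, hVU, hVc⟩ := exists_open_between_and_isCompact_closure hK hU hKU
    obtain ⟨φ, hφ, hr, hs, h1⟩ := exists_contMDiff_support_eq_eq_one_iff (n := (⊤ : ℕ∞))
      (modelWithCornersSelf ℝ (EuclideanSpace ℝ (Fin d))) hVo hK.isClosed hKV
    have hφ' : ContDiff ℝ (⊤ : ℕ∞) φ := hφ.contDiff
    have hcs : HasCompactSupport φ := by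
      rw [HasCompactSupport, tsupport, hs]; exact hVc
    have h0 : ∀ x, 0 ≤ φ x := fun x => (hr ⟨x, rfl⟩).1
    have hle : ∀ x, φ x ≤ 1 := fun x => (hr ⟨x, rfl⟩).2
    have hc := hφ'.continuous
    have key := h φ hφ' hcs h0
    have iA : Integrable φ A := hc.integrable_of_hasCompactSupport hcs
    have iB : Integrable φ B := hc.integrable_of_hasCompactSupport hcs
    have key2 : ∫⁻ x, ENNReal.ofReal (φ x) ∂B ≤ ∫⁻ x, ENNReal.ofReal (φ x) ∂A := by
      rw [← ofReal_integral_eq_lintegral_ofReal iA (ae_of_all _ h0),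
        ← ofReal_integral_eq_lintegral_ofReal iB (ae_of_all _ h0)]
      exact ENNReal.ofReal_le_ofReal key
    calc B K = ∫⁻ x, K.indicator 1 x ∂B := (lintegral_indicator_one hK.measurableSet).symm
      _ ≤ ∫⁻ x, ENNReal.ofReal (φ x) ∂B := by
        apply lintegral_mono
        intro x
        by_cases hx : x ∈ K
        · simp [hx, (h1 x).1 hx]
        · simp [hx]
      _ ≤ ∫⁻ x, ENNReal.ofReal (φ x) ∂A := key2
      _ ≤ ∫⁻ x, U.indicator 1 x ∂A := by
        apply lintegral_mono
        intro x
        by_cases hx : x ∈ U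
        · simp [hx, hle x]
        · have : φ x = 0 := by
            by_contra hne
            have : x ∈ Function.support φ := hne
            rw [hs] at this
            exact hx (hVU (subset_closure this))
          simp [this]
      _ = A U := lintegral_indicator_one hU.measurableSet
  have hO : ∀ U : Set (EuclideanSpace ℝ (Fin d)), IsOpen U → B U ≤ A U := by
    intro U hU
    rw [hU.measure_eq_iSup_isCompact]
    exact iSup₂_le fun K hKU => iSup_le fun hc => hK K U hc hU hKU
  refine Measure.le_iff'.2 fun s => ?_
  rw [s.measure_eq_iInf_isOpen A]
  exact le_iInf₂ fun U hsU => le_iInf fun hU => (measure_mono hsU).trans (hO U hU)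

theorem rnDeriv_mono_of_le {d : ℕ} (A B : Measure (EuclideanSpace ℝ (Fin d)))
    [IsLocallyFiniteMeasure A] [IsLocallyFiniteMeasure B] (h : B ≤ A) :
    ∀ᵐ x ∂(volume : Measure (EuclideanSpace ℝ (Fin d))),
      B.rnDeriv volume x ≤ A.rnDeriv volume x := by
  apply ae_le_of_forall_setLIntegral_le_of_sigmaFinite (Measure.measurable_rnDeriv _ _)
  intro s hs _
  obtain ⟨t, ht, h1, h2⟩ := Measure.mutuallySingular_singularPart A
    (volume : Measure (EuclideanSpace ℝ (Fin d)))
  have hst : (s ∩ t : Set _) =ᵐ[(volume : Measure (EuclideanSpace ℝ (Fin d)))] s := by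
    refine inter_ae_eq_left_of_ae_eq_univ ?_
    rw [ae_eq_univ]; exact h2
  calc ∫⁻ x in s, B.rnDeriv volume x = ∫⁻ x in s ∩ t, B.rnDeriv volume x :=
        (setLIntegral_congr hst).symm
    _ ≤ B (s ∩ t) := Measure.setLIntegral_rnDeriv_le _
    _ ≤ A (s ∩ t) := h _
    _ = (A.singularPart volume + volume.withDensity (A.rnDeriv volume)) (s ∩ t) := by
        rw [← A.haveLebesgueDecomposition_add volume]
    _ = ∫⁻ x in s ∩ t, A.rnDeriv volume x := by
        rw [Measure.add_apply, measure_mono_null Set.inter_subset_right h1, zero_add,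
          withDensity_apply _ (hs.inter ht)]
    _ = ∫⁻ x in s, A.rnDeriv volume x := setLIntegral_congr hst

theorem combo_aux {d : ℕ} {ι : Type*} (s : Finset ι)
    (a : ι → ℝ≥0) (P : ι → Measure (EuclideanSpace ℝ (Fin d)))
    (hP : ∀ i, IsLocallyFiniteMeasure (P i)) :
    ∃ A : Measure (EuclideanSpace ℝ (Fin d)), IsLocallyFiniteMeasure A ∧
      (∀ φ : EuclideanSpace ℝ (Fin d) → ℝ, Continuous φ → HasCompactSupport φ →
        ∫ x, φ x ∂A = ∑ i ∈ s, (a i : ℝ) * ∫ x, φ x ∂(P i)) ∧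
      ∀ᵐ x ∂(volume : Measure (EuclideanSpace ℝ (Fin d))),
        (A.rnDeriv volume x).toReal = ∑ i ∈ s, (a i : ℝ) * ((P i).rnDeriv volume x).toReal := by
  classical
  induction s using Finset.induction_on with
  | empty =>
    refine ⟨0, inferInstance, by simp, ?_⟩
    filter_upwards [Measure.rnDeriv_zero (volume : Measure (EuclideanSpace ℝ (Fin d)))] with x hx
    simp [hx]
  | insert i s hi ih =>
    obtain ⟨A, hA, h1, h2⟩ := ih
    have := hP i
    have hsm : IsLocallyFiniteMeasure (a i • P i) := inferInstance
    refine ⟨a i • P i + A, ⟨fun x => ?_⟩, ?_, ?_⟩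
    · obtain ⟨U, hU, hUf⟩ := (a i • P i).finiteAt_nhds x
      obtain ⟨V, hV, hVf⟩ := A.finiteAt_nhds x
      refine ⟨U ∩ V, inter_mem hU hV, ?_⟩
      rw [Measure.add_apply]
      exact ENNReal.add_lt_top.2 ⟨(measure_mono Set.inter_subset_left).trans_lt hUf,
        (measure_mono Set.inter_subset_right).trans_lt hVf⟩
    · intro φ hφ hc
      rw [integral_add_measure (hφ.integrable_of_hasCompactSupport hc)
        (hφ.integrable_of_hasCompactSupport hc), h1 φ hφ hc, Finset.sum_insert hi,
        integral_smul_nnreal_measure]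
      rfl
    · filter_upwards [h2, Measure.rnDeriv_add' (a i • P i) A volume,
        Measure.rnDeriv_smul_left' (P i) volume (a i), (a i • P i).rnDeriv_lt_top volume,
        A.rnDeriv_lt_top volume] with x hx hx1 hx2 hx3 hx4
      rw [hx1, Pi.add_apply, ENNReal.toReal_add hx3.ne hx4.ne, hx, hx2, Finset.sum_insert hi]
      simp [ENNReal.smul_def]

theorem combo {d : ℕ} {ι : Type*} [Fintype ι] (c : ι → ℝ)
    (P N : ι → Measure (EuclideanSpace ℝ (Fin d)))
    (hP : ∀ i, IsLocallyFiniteMeasure (P i)) (hN : ∀ i, IsLocallyFiniteMeasure (N i))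
    (h : ∀ φ : EuclideanSpace ℝ (Fin d) → ℝ, ContDiff ℝ (⊤ : ℕ∞) φ → HasCompactSupport φ →
      (∀ x, 0 ≤ φ x) → 0 ≤ ∑ i, c i * (∫ x, φ x ∂(P i) - ∫ x, φ x ∂(N i))) :
    ∀ᵐ x ∂(volume : Measure (EuclideanSpace ℝ (Fin d))),
      0 ≤ ∑ i, c i * (((P i).rnDeriv volume x).toReal - ((N i).rnDeriv volume x).toReal) := by
  let M : ι ⊕ ι → Measure (EuclideanSpace ℝ (Fin d)) := Sum.elim P N
  have hM : ∀ i, IsLocallyFiniteMeasure (M i) := by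
    rintro (i | i)
    · exact hP i
    · exact hN i
  obtain ⟨A, hA, hA1, hA2⟩ := combo_aux Finset.univ
    (Sum.elim (fun i => (c i).toNNReal) (fun i => (-c i).toNNReal)) M hM
  obtain ⟨B, hB, hB1, hB2⟩ := combo_aux Finset.univ
    (Sum.elim (fun i => (-c i).toNNReal) (fun i => (c i).toNNReal)) M hM
  have alg : ∀ u w : ι → ℝ, ∑ i, c i * (u i - w i) =
      (∑ i, ((c i).toNNReal : ℝ) * u i + ∑ i, ((-c i).toNNReal : ℝ) * w i) -
      (∑ i, ((-c i).toNNReal : ℝ) * u i + ∑ i, ((c i).toNNReal : ℝ) * w i) := by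
    intro u w
    rw [← Finset.sum_add_distrib, ← Finset.sum_add_distrib, ← Finset.sum_sub_distrib]
    refine Finset.sum_congr rfl fun i _ => ?_
    have : c i = ((c i).toNNReal : ℝ) - ((-c i).toNNReal : ℝ) := by
      rw [Real.coe_toNNReal', Real.coe_toNNReal', max_zero_sub_max_neg_zero_eq_self]
    linear_combination (u i - w i) * this
  have hle : B ≤ A := by
    refine measure_le_of_test A B fun φ hφ hc h0 => ?_
    have := h φ hφ hc h0
    rw [alg] at this
    rw [hA1 φ hφ.continuous hc, hB1 φ hφ.continuous hc]
    simp only [Fintype.sum_sum_type, Sum.elim_inl, Sum.elim_inr, M]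
    linarith
  filter_upwards [rnDeriv_mono_of_le A B hle, hA2, hB2, A.rnDeriv_lt_top volume]
    with x hx ha hb hx4
  rw [alg]
  have := ENNReal.toReal_mono hx4.ne hx
  rw [ha, hb] at this
  simp only [Fintype.sum_sum_type, Sum.elim_inl, Sum.elim_inr, M] at this
  linarith

theorem conv_line {d : ℕ} (f ψ : EuclideanSpace ℝ (Fin d) → ℝ) (hf : Continuous f)
    (hψ : ContDiff ℝ (⊤ : ℕ∞) ψ) (hc : HasCompactSupport ψ) (v : EuclideanSpace ℝ (Fin d))
    (t : ℝ) :
    HasDerivAt (fun t : ℝ => ∫ y, f y * ψ (t • v - y))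
      (∫ y, f y * fderiv ℝ ψ (t • v - y) v) t := by
  have hl : LocallyIntegrable f (volume : Measure (EuclideanSpace ℝ (Fin d))) :=
    hf.locallyIntegrable
  have h1 : ContDiff ℝ 1 ψ := hψ.of_le (by exact_mod_cast le_top)
  have h := hc.hasFDerivAt_convolution_right (ContinuousLinearMap.lsmul ℝ ℝ) hl h1 (t • v)
  have hlin : HasDerivAt (fun t : ℝ => t • v) v t := by
    simpa using (hasDerivAt_id t).smul_const v
  have h2 := h.comp_hasDerivAt t hlin
  rw [convolution_precompR_apply _ hl (hc.fderiv ℝ) (h1.continuous_fderiv one_ne_zero)] at h2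
  exact h2

theorem contDiff_dir {d : ℕ} (ψ : EuclideanSpace ℝ (Fin d) → ℝ)
    (hψ : ContDiff ℝ (⊤ : ℕ∞) ψ) (v : EuclideanSpace ℝ (Fin d)) :
    ContDiff ℝ (⊤ : ℕ∞) (fun z => fderiv ℝ ψ z v) :=
  (hψ.fderiv_right (m := (⊤ : ℕ∞)) (by simp)).clm_apply contDiff_const

theorem fderiv_neg_arg {d : ℕ} (g : EuclideanSpace ℝ (Fin d) → ℝ) (hg : Differentiable ℝ g)
    (x v : EuclideanSpace ℝ (Fin d)) :
    fderiv ℝ (fun x => g (-x)) x v = - fderiv ℝ g (-x) v := by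
  have h := (hg (-x)).hasFDerivAt.comp x (hasFDerivAt_id x).neg
  have h2 : fderiv ℝ (fun x => g (-x)) x = _ := h.fderiv
  rw [h2]; simp

theorem weak_convex {d : ℕ} (f φ : EuclideanSpace ℝ (Fin d) → ℝ)
    (hf : ConvexOn ℝ Set.univ f)
    (hφ : ContDiff ℝ (⊤ : ℕ∞) φ) (hc : HasCompactSupport φ) (h0 : ∀ x, 0 ≤ φ x)
    (v : EuclideanSpace ℝ (Fin d)) :
    0 ≤ ∫ x, f x * fderiv ℝ (fun z => fderiv ℝ φ z v) x v := by
  have hfc : Continuous f := hf.locallyLipschitz.continuous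
  let ψ : EuclideanSpace ℝ (Fin d) → ℝ := fun x => φ (-x)
  have hψ : ContDiff ℝ (⊤ : ℕ∞) ψ := hφ.comp contDiff_neg
  have hψc : HasCompactSupport ψ := hc.comp_homeomorph (Homeomorph.neg _)
  let ψ1 : EuclideanSpace ℝ (Fin d) → ℝ := fun z => fderiv ℝ ψ z v
  have hψ1 : ContDiff ℝ (⊤ : ℕ∞) ψ1 := contDiff_dir ψ hψ v
  have hψ1c : HasCompactSupport ψ1 := hψc.fderiv_apply ℝ v
  let G : ℝ → ℝ := fun t => ∫ y, f y * ψ (t • v - y)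
  let G1 : ℝ → ℝ := fun t => ∫ y, f y * ψ1 (t • v - y)
  have hG : ∀ t, HasDerivAt G (G1 t) t := fun t => conv_line f ψ hfc hψ hψc v t
  have hG1 : ∀ t, HasDerivAt G1 (∫ y, f y * fderiv ℝ ψ1 (t • v - y) v) t :=
    fun t => conv_line f ψ1 hfc hψ1 hψ1c v t
  have hGeq : ∀ t, G t = ∫ y, f (t • v + y) * φ y := by
    intro t
    change ∫ y, f y * ψ (t • v - y) = _
    rw [← integral_add_left_eq_self (μ := volume) (fun y => f y * ψ (t • v - y)) (t • v)]
    simp [ψ]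
  have hint : ∀ t : ℝ, Integrable (fun y => f (t • v + y) * φ y) := by
    intro t
    refine Continuous.integrable_of_hasCompactSupport ?_ hc.mul_left
    have := hφ.continuous
    fun_prop
  have hGc : ConvexOn ℝ Set.univ G := by
    refine ⟨convex_univ, fun s _ t _ a b ha hb hab => ?_⟩
    simp only [hGeq, smul_eq_mul]
    rw [← integral_const_mul, ← integral_const_mul,
      ← integral_add ((hint s).const_mul a) ((hint t).const_mul b)]
    refine integral_mono (by simpa using hint (a * s + b * t))
      (((hint s).const_mul a).add ((hint t).const_mul b)) fun y => ?_
    have hh := hf.2 (Set.mem_univ (s • v + y)) (Set.mem_univ (t • v + y)) ha hb hab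
    have e : a • (s • v + y) + b • (t • v + y) = (a * s + b * t) • v + y := by
      have : y = (a + b) • y := by rw [hab, one_smul]
      conv_rhs => rw [this]
      module
    rw [e] at hh
    have := mul_le_mul_of_nonneg_right hh (h0 y)
    simp only [smul_eq_mul] at this
    simp only []
    linarith
  have hderiv : deriv G = G1 := funext fun t => (hG t).deriv
  have hmono : Monotone G1 := by
    rw [← hderiv, ← monotoneOn_univ]
    exact hGc.monotoneOn_deriv fun t _ => (hG t).differentiableAt
  have hnn : 0 ≤ deriv G1 0 := hmono.deriv_nonneg
  rw [(hG1 0).deriv] at hnn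
  have e1 : ∀ x, ψ1 x = - fderiv ℝ φ (-x) v := by
    intro x
    simp only [ψ1, ψ]
    exact fderiv_neg_arg φ (hφ.differentiable (by simp)) x v
  have e2 : ∀ x, fderiv ℝ ψ1 x v = fderiv ℝ (fun z => fderiv ℝ φ z v) (-x) v := by
    intro x
    have : ψ1 = fun x => - ((fun z => fderiv ℝ φ z v) (-x)) := funext e1
    rw [this, fderiv_fun_neg]
    have h3 := fderiv_neg_arg (fun z => fderiv ℝ φ z v)
      ((contDiff_dir φ hφ v).differentiable (by simp)) x v
    change - (fderiv ℝ (fun x => fderiv ℝ φ (-x) v) x v) = _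
    rw [h3, neg_neg]
  simpa [e2] using hnn

theorem sum_secondPartial {d : ℕ} (φ : EuclideanSpace ℝ (Fin d) → ℝ)
    (hφ : ContDiff ℝ (⊤ : ℕ∞) φ) (v x : EuclideanSpace ℝ (Fin d)) :
    fderiv ℝ (fun z => fderiv ℝ φ z v) x v =
      ∑ p : Fin d × Fin d, v p.1 * v p.2 * secondPartial d φ p.1 p.2 x := by
  have hv : v = ∑ i, v i • EuclideanSpace.single i (1 : ℝ) := by
    ext j
    simp [Finset.sum_apply, Pi.single_apply]
  have hd : ∀ w : EuclideanSpace ℝ (Fin d), fderiv ℝ (fun z => fderiv ℝ φ z w) x =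
      (fderiv ℝ (fderiv ℝ φ) x).flip w := by
    intro w
    have : DifferentiableAt ℝ (fderiv ℝ φ) x :=
      ((hφ.fderiv_right (m := (⊤ : ℕ∞)) (by simp)).differentiable (by simp)) x
    rw [fderiv_clm_apply this (differentiableAt_const w)]
    simp
  simp only [secondPartial, hd, ContinuousLinearMap.flip_apply]
  conv_lhs => rw [hv]
  simp only [map_sum, map_smul, _root_.sum_apply, _root_.smul_apply,
    smul_eq_mul, Fintype.sum_prod_type, Finset.mul_sum]
  rw [Finset.sum_comm]
  refine Finset.sum_congr rfl fun i _ => Finset.sum_congr rfl fun j _ => by ring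

theorem secondPartial_symm {d : ℕ} (φ : EuclideanSpace ℝ (Fin d) → ℝ)
    (hφ : ContDiff ℝ (⊤ : ℕ∞) φ) (i j : Fin d) (x : EuclideanSpace ℝ (Fin d)) :
    secondPartial d φ i j x = secondPartial d φ j i x := by
  have hd : ∀ w : EuclideanSpace ℝ (Fin d), fderiv ℝ (fun z => fderiv ℝ φ z w) x =
      (fderiv ℝ (fderiv ℝ φ) x).flip w := by
    intro w
    have : DifferentiableAt ℝ (fderiv ℝ φ) x :=
      ((hφ.fderiv_right (m := (⊤ : ℕ∞)) (by simp)).differentiable (by simp)) x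
    rw [fderiv_clm_apply this (differentiableAt_const w)]
    simp
  simp only [secondPartial, hd, ContinuousLinearMap.flip_apply]
  exact (hφ.contDiffAt.isSymmSndFDerivAt (by simp only [minSmoothness_of_isRCLikeNormedField]; exact WithTop.coe_le_coe.2 le_top)).eq _ _

theorem stmt2 (d : ℕ) (f : EuclideanSpace ℝ (Fin d) → ℝ)
    (hf : ConvexOn ℝ Set.univ f)
    (μp μn : Fin d → Fin d → Measure (EuclideanSpace ℝ (Fin d)))
    (hμ : IsSecondDerivMeasures d f μp μn) :
    ∀ᵐ x ∂(volume : Measure (EuclideanSpace ℝ (Fin d))),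
      (densityMatrix d μp μn x).PosSemidef := by
  obtain ⟨hp, hn, h⟩ := hμ
  have hsym : ∀ i j, ∀ᵐ x ∂(volume : Measure (EuclideanSpace ℝ (Fin d))),
      densityMatrix d μp μn x i j ≤ densityMatrix d μp μn x j i := by
    intro i j
    have := combo (d := d) ![(-1 : ℝ), 1] ![μp i j, μp j i] ![μn i j, μn j i]
      (by intro k; fin_cases k <;> simp <;> infer_instance)
      (by intro k; fin_cases k <;> simp <;> infer_instance) (by
        intro φ hφ hc _
        simp [Fin.sum_univ_two, h _ _ φ hφ hc, secondPartial_symm φ hφ i j])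
    filter_upwards [this] with x hx
    simp [Fin.sum_univ_two] at hx
    simp only [densityMatrix, Matrix.of_apply]
    linarith
  have hpos : ∀ v : EuclideanSpace ℝ (Fin d),
      ∀ᵐ x ∂(volume : Measure (EuclideanSpace ℝ (Fin d))),
      0 ≤ ∑ p : Fin d × Fin d, v p.1 * v p.2 * densityMatrix d μp μn x p.1 p.2 := by
    intro v
    refine combo (d := d) (fun p : Fin d × Fin d => v p.1 * v p.2) (fun p => μp p.1 p.2)
      (fun p => μn p.1 p.2) (fun p => hp _ _) (fun p => hn _ _) ?_
    intro φ hφ hc h0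
    simp only [h _ _ φ hφ hc]
    have key := weak_convex f φ hf hφ hc h0 v
    have hfc : Continuous f := hf.locallyLipschitz.continuous
    simp only [sum_secondPartial φ hφ, Finset.mul_sum] at key
    rw [integral_finsetSum] at key
    · refine key.trans_eq (Finset.sum_congr rfl fun p _ => ?_)
      rw [← integral_const_mul]
      congr 1; ext x; ring
    · intro p _
      refine Continuous.integrable_of_hasCompactSupport ?_ ?_
      · exact hfc.mul (continuous_const.mul (contDiff_dir _ (contDiff_dir φ hφ _) _).continuous)
      · have : HasCompactSupport (secondPartial d φ p.1 p.2) :=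
          (hc.fderiv_apply ℝ _).fderiv_apply ℝ _
        exact this.mul_left.mul_left
  have hpos' : ∀ᵐ x ∂(volume : Measure (EuclideanSpace ℝ (Fin d))), ∀ n : ℕ,
      0 ≤ ∑ p : Fin d × Fin d, TopologicalSpace.denseSeq (EuclideanSpace ℝ (Fin d)) n p.1 *
        TopologicalSpace.denseSeq (EuclideanSpace ℝ (Fin d)) n p.2 *
          densityMatrix d μp μn x p.1 p.2 := ae_all_iff.2 fun n => hpos _
  filter_upwards [hpos', ae_all_iff.2 fun i => ae_all_iff.2 fun j => hsym i j] with x hx hs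
  refine Matrix.PosSemidef.of_dotProduct_mulVec_nonneg ?_ fun w => ?_
  · ext i j
    simp only [Matrix.conjTranspose_apply, star_trivial]
    exact le_antisymm (hs j i) (hs i j)
  · have hall : ∀ v : EuclideanSpace ℝ (Fin d),
        0 ≤ ∑ p : Fin d × Fin d, v p.1 * v p.2 * densityMatrix d μp μn x p.1 p.2 := by
      intro v
      have hcl : IsClosed {v : EuclideanSpace ℝ (Fin d) |
          0 ≤ ∑ p : Fin d × Fin d, v p.1 * v p.2 * densityMatrix d μp μn x p.1 p.2} :=
        isClosed_le continuous_const (by fun_prop)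
      exact (TopologicalSpace.denseRange_denseSeq _).induction_on
        (p := fun v => 0 ≤ ∑ p : Fin d × Fin d, v p.1 * v p.2 * densityMatrix d μp μn x p.1 p.2)
        v hcl hx
    refine (hall (WithLp.toLp 2 w)).trans_eq ?_
    simp only [dotProduct, Matrix.mulVec, Fintype.sum_prod_type, Finset.mul_sum, star_trivial,
      Pi.star_apply]
    refine Finset.sum_congr rfl fun i _ => Finset.sum_congr rfl fun j _ => by ring
end

section
/- Let f : ℝ^d → ℝ be a convex function of at most linear growth, let p : ℝ^d → ℝ^d be a subgradient selection (f(y) ≥ f(x) + ⟨p(x), y − x⟩ for all x, y), and let Q(x) be the matrix of Radon–Nikodym derivatives of the absolutely continuous parts of the second derivative measures μ_{ij} of f. Then for Lebesgue-almost every x ∈ ℝ^d: lim_{t → 0⁺} (1/t) ∫_{ℝ^d} |f(x + y) − f(x) − ⟨p(x), y⟩| · φ_t(y) dy = (1/2) tr(Q(x)), where φ_t(y) = (2πt)^{−d/2} exp(−‖y‖²/(2t)). -/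
open MeasureTheory Filter Metric
open scoped Topology ENNReal NNReal RealInnerProductSpace

/-- The `d`-dimensional Gaussian heat kernel `φ_t`. -/
noncomputable def heatKernel (d : ℕ) (t : ℝ) (y : EuclideanSpace ℝ (Fin d)) : ℝ :=
  (2 * Real.pi * t) ^ (-(d : ℝ) / 2) * Real.exp (-‖y‖ ^ 2 / (2 * t))

lemma hk_nonneg (d : ℕ) {t : ℝ} (ht : 0 < t) (y : EuclideanSpace ℝ (Fin d)) :
    0 ≤ heatKernel d t y := by
  unfold heatKernel; positivity

lemma hk_cont (d : ℕ) (t : ℝ) : Continuous (heatKernel d t) := by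
  unfold heatKernel; fun_prop

lemma gauss_integrable (d : ℕ) {b : ℝ} (hb : 0 < b) :
    Integrable (fun y : EuclideanSpace ℝ (Fin d) => Real.exp (-b * ‖y‖ ^ 2)) := by
  by_contra h
  have h1 := GaussianFourier.integral_rexp_neg_mul_sq_norm (V := EuclideanSpace ℝ (Fin d)) hb
  rw [integral_undef h] at h1
  have : 0 < (Real.pi / b) ^ ((Module.finrank ℝ (EuclideanSpace ℝ (Fin d)) : ℝ) / 2) := by
    have := Real.pi_pos
    positivity
  linarith

lemma hk_integral (d : ℕ) {t : ℝ} (ht : 0 < t) :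
    ∫ y, heatKernel d t y = 1 := by
  unfold heatKernel
  rw [integral_const_mul]
  have hb : 0 < 1 / (2 * t) := by positivity
  have h1 := GaussianFourier.integral_rexp_neg_mul_sq_norm (V := EuclideanSpace ℝ (Fin d)) hb
  have h2 : ∀ y : EuclideanSpace ℝ (Fin d),
      Real.exp (-‖y‖ ^ 2 / (2 * t)) = Real.exp (-(1 / (2 * t)) * ‖y‖ ^ 2) := by
    intro y; congr 1; ring
  simp_rw [h2]
  rw [h1]
  have h3 : Real.pi / (1 / (2 * t)) = 2 * Real.pi * t := by field_simp
  rw [h3, finrank_euclideanSpace_fin, ← Real.rpow_add (by have := Real.pi_pos; positivity)]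
  have : -(d : ℝ) / 2 + d / 2 = 0 := by ring
  rw [this, Real.rpow_zero]

lemma hk_integrable (d : ℕ) {t : ℝ} (ht : 0 < t) : Integrable (heatKernel d t) := by
  by_contra h
  have := hk_integral d ht
  rw [integral_undef h] at this
  norm_num at this

lemma tail_tendsto (d : ℕ) {b : ℝ} (hb : 0 < b) (k : ℕ) :
    Tendsto (fun t : ℝ => (1 / t) ^ k * ((2 * Real.pi * t) ^ (-(d : ℝ) / 2) * Real.exp (-b / t)))
      (nhdsWithin 0 (Set.Ioi 0)) (nhds 0) := by
  have h := (tendsto_rpow_mul_exp_neg_mul_atTop_nhds_zero ((k : ℝ) + d / 2) b hb).comp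
    (tendsto_inv_nhdsGT_zero (𝕜 := ℝ))
  have h2 := h.const_mul ((2 * Real.pi) ^ (-(d : ℝ) / 2))
  rw [mul_zero] at h2
  refine h2.congr' ?_
  filter_upwards [self_mem_nhdsWithin] with t ht
  have ht : 0 < t := ht
  have hpi := Real.pi_pos
  simp only [Function.comp]
  rw [Real.mul_rpow (by positivity) ht.le, Real.rpow_add (by positivity), Real.rpow_natCast,
    Real.inv_rpow ht.le, ← Real.rpow_neg ht.le]
  have : -b * t⁻¹ = -b / t := by ring
  rw [this, one_div, neg_div]
  ring

lemma hk_tail (d : ℕ) {ε t : ℝ} (hε : 0 < ε) (ht : 0 < t) (ht1 : t ≤ 1)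
    (y : EuclideanSpace ℝ (Fin d)) (hy : ε ≤ ‖y‖) :
    heatKernel d t y ≤ ((2 * Real.pi * t) ^ (-(d : ℝ) / 2) * Real.exp (-(ε ^ 2 / 4) / t)) *
      Real.exp (-(1 / 4) * ‖y‖ ^ 2) := by
  unfold heatKernel
  have hpi := Real.pi_pos
  rw [mul_assoc _ (Real.exp _) (Real.exp _), ← Real.exp_add]
  gcongr
  have h1 : ε ^ 2 ≤ ‖y‖ ^ 2 := by gcongr
  have h2 : ε ^ 2 / 4 / t ≤ ‖y‖ ^ 2 / 4 / t := by gcongr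
  have h3 : ‖y‖ ^ 2 / 4 ≤ ‖y‖ ^ 2 / 4 / t := by
    rw [le_div_iff₀ ht]; nlinarith [sq_nonneg ‖y‖]
  have h4 : -‖y‖ ^ 2 / (2 * t) = -(‖y‖ ^ 2 / 4 / t) - ‖y‖ ^ 2 / 4 / t := by field_simp; ring
  rw [h4, neg_div]
  linarith

/-- layer cake comparison -/
lemma layer_comp {d : ℕ} (x : EuclideanSpace ℝ (Fin d)) {δ t : ℝ} (hδ : 0 < δ) (ht : 0 < t)
    (μ ν : Measure (EuclideanSpace ℝ (Fin d)))
    (h : ∀ r, 0 < r → r ≤ δ → μ (closedBall x r) ≤ ν (closedBall x r)) :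
    ∫⁻ w in closedBall x δ, ENNReal.ofReal (heatKernel d t (w - x)) ∂μ ≤
      ∫⁻ w in closedBall x δ, ENNReal.ofReal (heatKernel d t (w - x)) ∂ν := by
  have hc : Continuous fun w => heatKernel d t (w - x) := (hk_cont d t).comp (by fun_prop)
  have hpi := Real.pi_pos
  rw [lintegral_eq_lintegral_meas_le _ (ae_of_all _ fun w => hk_nonneg d ht _) hc.aemeasurable,
    lintegral_eq_lintegral_meas_le _ (ae_of_all _ fun w => hk_nonneg d ht _) hc.aemeasurable]
  set K : ℝ := (2 * Real.pi * t) ^ (-(d : ℝ) / 2) with hK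
  have hKpos : 0 < K := by positivity
  have hne : ∀ᵐ s ∂((volume : Measure ℝ).restrict (Set.Ioi 0)), s ≠ K :=
    ae_restrict_of_ae (by simp [ae_iff, measure_singleton])
  refine lintegral_mono_ae ?_
  filter_upwards [hne, ae_restrict_mem measurableSet_Ioi] with s hs hs0
  have hs0 : 0 < s := hs0
  have hm : MeasurableSet {a | s ≤ heatKernel d t (a - x)} :=
    (isClosed_le continuous_const hc).measurableSet
  rw [Measure.restrict_apply hm, Measure.restrict_apply hm]
  have key : ∀ w, s ≤ heatKernel d t (w - x) ↔ ‖w - x‖ ^ 2 ≤ - (2 * t) * Real.log (s / K) := by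
    intro w
    unfold heatKernel
    rw [← hK, ← div_le_iff₀' hKpos, ← Real.log_le_iff_le_exp (by positivity),
      le_div_iff₀ (by positivity)]
    constructor <;> intro h <;> linarith
  rcases lt_or_gt_of_ne hs with h1 | h1
  · have hlog : Real.log (s / K) < 0 :=
      Real.log_neg (by positivity) (by rw [div_lt_one hKpos]; exact h1)
    have hpos : 0 < - (2 * t) * Real.log (s / K) := by nlinarith
    have hset : {a | s ≤ heatKernel d t (a - x)} ∩ closedBall x δ =
        closedBall x (min (Real.sqrt (- (2 * t) * Real.log (s / K))) δ) := by
      ext w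
      simp only [Set.mem_inter_iff, Set.mem_ofPred_eq, mem_closedBall, key, le_min_iff,
        dist_eq_norm]
      rw [Real.le_sqrt (norm_nonneg _) hpos.le]
    rw [hset]
    exact h _ (lt_min (Real.sqrt_pos.2 hpos) hδ) (min_le_right _ _)
  · have hset : {a | s ≤ heatKernel d t (a - x)} = ∅ := by
      ext w
      simp only [Set.mem_ofPred_eq, key, Set.mem_empty_iff_false, iff_false, not_le]
      have hlog : 0 < Real.log (s / K) := Real.log_pos (by rw [one_lt_div hKpos]; exact h1)
      nlinarith [sq_nonneg ‖w - x‖]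
    simp [hset]

lemma tail_unif (d : ℕ) {ε : ℝ} (hε : 0 < ε) {η : ℝ} (hη : 0 < η) :
    ∀ᶠ t in nhdsWithin (0 : ℝ) (Set.Ioi 0), ∀ y : EuclideanSpace ℝ (Fin d), ε ≤ ‖y‖ →
      heatKernel d t y ≤ η * Real.exp (-(1 / 4) * ‖y‖ ^ 2) := by
  have h := tail_tendsto d (b := ε ^ 2 / 4) (by positivity) 0
  have h1 := h.eventually (gt_mem_nhds hη)
  filter_upwards [h1, self_mem_nhdsWithin, Ioc_mem_nhdsGT (zero_lt_one' ℝ)] with t ht ht0 ht1 y hy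
  refine (hk_tail d hε ht0 ht1.2 y hy).trans ?_
  rw [pow_zero, one_mul] at ht
  gcongr

lemma tail_unif' (d : ℕ) {ε : ℝ} (hε : 0 < ε) {η : ℝ} (hη : 0 < η) :
    ∀ᶠ t in nhdsWithin (0 : ℝ) (Set.Ioi 0), ∀ y : EuclideanSpace ℝ (Fin d), ε ≤ ‖y‖ →
      heatKernel d t y ≤ η := by
  filter_upwards [tail_unif d hε hη] with t ht y hy
  refine (ht y hy).trans ?_
  have : Real.exp (-(1 / 4) * ‖y‖ ^ 2) ≤ 1 := Real.exp_le_one_iff.2 (by nlinarith [sq_nonneg ‖y‖])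
  nlinarith

lemma mass_tendsto {d : ℕ} (x : EuclideanSpace ℝ (Fin d)) {δ : ℝ} (hδ : 0 < δ) :
    Tendsto (fun t => ∫ w in closedBall x δ, heatKernel d t (w - x))
      (nhdsWithin 0 (Set.Ioi 0)) (nhds 1) := by
  have key : ∀ᶠ t in nhdsWithin (0 : ℝ) (Set.Ioi 0),
      ∫ w in closedBall x δ, heatKernel d t (w - x) =
        1 - ∫ w in (closedBall x δ)ᶜ, heatKernel d t (w - x) := by
    filter_upwards [self_mem_nhdsWithin] with t ht
    have h1 : ∫ w, heatKernel d t (w - x) = 1 := by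
      rw [integral_sub_right_eq_self (heatKernel d t) x, hk_integral d ht]
    have h2 : Integrable fun w => heatKernel d t (w - x) := (hk_integrable d ht).comp_sub_right x
    rw [← h1, ← integral_add_compl isClosed_closedBall.measurableSet h2]
    ring
  refine Tendsto.congr' (EventuallyEq.symm key) ?_
  suffices h : Tendsto (fun t => ∫ w in (closedBall x δ)ᶜ, heatKernel d t (w - x))
      (nhdsWithin 0 (Set.Ioi 0)) (nhds 0) by
    simpa using h.const_sub 1
  have hg := (gauss_integrable d (b := 1 / 4) (by norm_num)).comp_sub_right x
  set G := ∫ w in (closedBall x δ)ᶜ, Real.exp (-(1 / 4) * ‖w - x‖ ^ 2) with hG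
  have hG0 : 0 ≤ G := integral_nonneg fun w => (Real.exp_pos _).le
  have hb := (tail_tendsto d (b := δ ^ 2 / 4) (by positivity) 0).mul_const G
  rw [zero_mul] at hb
  refine squeeze_zero' ?_ ?_ hb
  · filter_upwards [self_mem_nhdsWithin] with t ht
    exact integral_nonneg fun w => hk_nonneg d ht _
  · filter_upwards [self_mem_nhdsWithin, Ioc_mem_nhdsGT (zero_lt_one' ℝ)] with t ht ht1
    rw [pow_zero, one_mul, hG, ← integral_const_mul]
    refine setIntegral_mono_on ?_ ?_ isClosed_closedBall.measurableSet.compl ?_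
    · exact ((hk_integrable d ht).comp_sub_right x).integrableOn
    · exact (hg.const_mul _).integrableOn
    · intro w hw
      refine hk_tail d hδ ht ht1.2 _ ?_
      simp only [Set.mem_compl_iff, mem_closedBall, not_le, dist_eq_norm] at hw
      exact hw.le

lemma mass_tendsto' {d : ℕ} (x : EuclideanSpace ℝ (Fin d)) {δ : ℝ} (hδ : 0 < δ) :
    Tendsto (fun t => ∫⁻ w in closedBall x δ, ENNReal.ofReal (heatKernel d t (w - x)))
      (nhdsWithin 0 (Set.Ioi 0)) (nhds 1) := by
  have h := ENNReal.tendsto_ofReal (mass_tendsto x hδ)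
  rw [ENNReal.ofReal_one] at h
  refine h.congr' ?_
  filter_upwards [self_mem_nhdsWithin] with t ht
  exact ofReal_integral_eq_lintegral_ofReal ((hk_integrable d ht).comp_sub_right x).integrableOn
    (ae_of_all _ fun w => hk_nonneg d ht _)

lemma gauss_leb {d : ℕ} (x : EuclideanSpace ℝ (Fin d)) (μ : Measure (EuclideanSpace ℝ (Fin d)))
    [IsLocallyFiniteMeasure μ] (D : ℝ≥0∞)
    (h : Tendsto (fun r => μ (closedBall x r) / volume (closedBall x r)) (𝓝[>] 0) (𝓝 D))
    {R : ℝ} (hR : 0 < R) :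
    Tendsto (fun t => ∫⁻ w in closedBall x R, ENNReal.ofReal (heatKernel d t (w - x)) ∂μ)
      (𝓝[>] 0) (𝓝 D) := by
  have hfin : μ (closedBall x R) < ∞ := (isCompact_closedBall x R).measure_lt_top
  rw [tendsto_order]
  constructor
  · intro a ha
    obtain ⟨c, hac, hcD⟩ := exists_between ha
    have hev := (tendsto_order.1 h).1 c hcD
    rw [eventually_nhdsWithin_iff, Metric.eventually_nhds_iff] at hev
    obtain ⟨ε, hε, hev⟩ := hev
    set δ := min (ε / 2) R
    have hδ : 0 < δ := lt_min (by positivity) hR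
    have hcomp : ∀ t : ℝ, 0 < t →
        c * ∫⁻ w in closedBall x δ, ENNReal.ofReal (heatKernel d t (w - x)) ≤
        ∫⁻ w in closedBall x δ, ENNReal.ofReal (heatKernel d t (w - x)) ∂μ := by
      intro t ht
      have := layer_comp x hδ ht (c • volume) μ ?_
      · rwa [Measure.restrict_smul, lintegral_smul_measure, smul_eq_mul] at this
      · intro r hr hrδ
        have h2 := hev (y := r) (by
          rw [Real.dist_eq, sub_zero, abs_of_pos hr]
          have := min_le_left (ε / 2) R
          linarith) hr
        rw [Measure.smul_apply, smul_eq_mul]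
        have h0 : volume (closedBall x r) ≠ 0 := (measure_closedBall_pos _ x hr).ne'
        have h1 : volume (closedBall x r) ≠ ∞ := (isCompact_closedBall x r).measure_lt_top.ne
        rw [← ENNReal.le_div_iff_mul_le (Or.inl h0) (Or.inl h1)]
        exact h2.le
    have hlim := ENNReal.Tendsto.const_mul (a := c) (mass_tendsto' x hδ) (Or.inl one_ne_zero)
    rw [mul_one] at hlim
    filter_upwards [(tendsto_order.1 hlim).1 a hac, self_mem_nhdsWithin] with t h1 ht
    refine h1.trans_le ((hcomp t ht).trans ?_)
    exact lintegral_mono_set (closedBall_subset_closedBall (min_le_right _ _))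
  · intro b hb
    obtain ⟨c, hDc, hcb⟩ := exists_between hb
    have hev := (tendsto_order.1 h).2 c hDc
    rw [eventually_nhdsWithin_iff, Metric.eventually_nhds_iff] at hev
    obtain ⟨ε, hε, hev⟩ := hev
    set δ := min (ε / 2) R
    have hδ : 0 < δ := lt_min (by positivity) hR
    have hcomp : ∀ t : ℝ, 0 < t →
        ∫⁻ w in closedBall x δ, ENNReal.ofReal (heatKernel d t (w - x)) ∂μ ≤ 
        c * ∫⁻ w in closedBall x δ, ENNReal.ofReal (heatKernel d t (w - x)) := by
      intro t ht
      have := layer_comp x hδ ht μ (c • volume) ?_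
      · rwa [Measure.restrict_smul, lintegral_smul_measure, smul_eq_mul] at this
      · intro r hr hrδ
        have h2 := hev (y := r) (by
          rw [Real.dist_eq, sub_zero, abs_of_pos hr]
          have := min_le_left (ε / 2) R
          linarith) hr
        rw [Measure.smul_apply, smul_eq_mul]
        have h0 : volume (closedBall x r) ≠ 0 := (measure_closedBall_pos _ x hr).ne'
        have h1 : volume (closedBall x r) ≠ ∞ := (isCompact_closedBall x r).measure_lt_top.ne
        rw [← ENNReal.div_le_iff_le_mul (Or.inl h0) (Or.inl h1)]
        exact h2.le
    have hlim := ENNReal.Tendsto.const_mul (a := c) (mass_tendsto' x hδ) (Or.inl one_ne_zero)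
    rw [mul_one] at hlim
    -- tail
    have htail : Tendsto (fun t : ℝ => ENNReal.ofReal ((2 * Real.pi * t) ^ (-(d : ℝ) / 2) *
        Real.exp (-(δ ^ 2 / 4) / t)) * μ (closedBall x R)) (𝓝[>] 0) (𝓝 0) := by
      have h1 := tail_tendsto d (b := δ ^ 2 / 4) (by positivity) 0
      simp only [pow_zero, one_mul] at h1
      have h2 := ENNReal.Tendsto.mul_const (b := μ (closedBall x R)) (ENNReal.tendsto_ofReal h1)
        (Or.inr hfin.ne)
      simpa using h2
    have hsum := hlim.add htail
    rw [add_zero] at hsum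
    filter_upwards [(tendsto_order.1 hsum).2 b hcb, self_mem_nhdsWithin,
      Ioc_mem_nhdsGT (zero_lt_one' ℝ)] with t h1 ht ht1
    refine lt_of_le_of_lt ?_ h1
    have hsub : closedBall x δ ⊆ closedBall x R := closedBall_subset_closedBall (min_le_right _ _)
    have hcov : closedBall x R = closedBall x δ ∪ (closedBall x R \ closedBall x δ) :=
      (Set.union_sdiff_cancel hsub).symm
    rw [hcov]
    refine (lintegral_union_le _ _ _).trans ?_
    rw [← hcov]
    refine add_le_add (hcomp t ht) ?_
    calc ∫⁻ w in closedBall x R \ closedBall x δ, ENNReal.ofReal (heatKernel d t (w - x)) ∂μ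
        ≤ ∫⁻ w in closedBall x R \ closedBall x δ, ENNReal.ofReal
          ((2 * Real.pi * t) ^ (-(d : ℝ) / 2) * Real.exp (-(δ ^ 2 / 4) / t)) ∂μ := by
          refine setLIntegral_mono measurable_const ?_
          intro w hw
          refine ENNReal.ofReal_le_ofReal ?_
          have hw2 := hw.2
          simp only [mem_closedBall, not_le, dist_eq_norm] at hw2
          refine (hk_tail d hδ ht ht1.2 _ hw2.le).trans ?_
          have : Real.exp (-(1 / 4) * ‖w - x‖ ^ 2) ≤ 1 :=
            Real.exp_le_one_iff.2 (by nlinarith [sq_nonneg ‖w - x‖])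
          have hpi := Real.pi_pos
          have ht : 0 < t := ht
          exact mul_le_of_le_one_right (by positivity) this
      _ ≤ _ := by
          rw [setLIntegral_const]
          gcongr
          exact Set.sdiff_subset

lemma gauss_leb' {d : ℕ} (x : EuclideanSpace ℝ (Fin d)) (μ : Measure (EuclideanSpace ℝ (Fin d)))
    [IsLocallyFiniteMeasure μ] (D : ℝ≥0∞) (hD : D ≠ ∞)
    (h : Tendsto (fun r => μ (closedBall x r) / volume (closedBall x r)) (𝓝[>] 0) (𝓝 D))
    (χ : EuclideanSpace ℝ (Fin d) → ℝ) (hχc : Continuous χ) (h0 : ∀ w, 0 ≤ χ w) (h1 : ∀ w, χ w ≤ 1)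
    (hin : ∀ w ∈ closedBall x 1, χ w = 1) (hout : ∀ w, w ∉ closedBall x 2 → χ w = 0) :
    Tendsto (fun t => ∫ w, χ w * heatKernel d t (w - x) ∂μ)
      (𝓝[>] 0) (𝓝 D.toReal) := by
  have hsq : Tendsto (fun t => ∫⁻ w, ENNReal.ofReal (χ w * heatKernel d t (w - x)) ∂μ)
      (𝓝[>] 0) (𝓝 D) := by
    refine tendsto_of_tendsto_of_tendsto_of_le_of_le' (gauss_leb x μ D h one_pos)
      (gauss_leb x μ D h two_pos) ?_ ?_
    · filter_upwards [self_mem_nhdsWithin] with t ht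
      rw [← lintegral_indicator isClosed_closedBall.measurableSet]
      refine lintegral_mono fun w => ?_
      by_cases hw : w ∈ closedBall x 1
      · simp [Set.indicator_of_mem hw, hin w hw]
      · simp [Set.indicator_of_notMem hw]
    · filter_upwards [self_mem_nhdsWithin] with t ht
      rw [← lintegral_indicator isClosed_closedBall.measurableSet]
      refine lintegral_mono fun w => ?_
      by_cases hw : w ∈ closedBall x 2
      · rw [Set.indicator_of_mem hw]
        exact ENNReal.ofReal_le_ofReal (mul_le_of_le_one_left (hk_nonneg d ht _) (h1 w))
      · simp [Set.indicator_of_notMem hw, hout w hw]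
  have h2 := (ENNReal.tendsto_toReal hD).comp hsq
  refine h2.congr' ?_
  filter_upwards [self_mem_nhdsWithin] with t ht
  rw [integral_eq_lintegral_of_nonneg_ae]
  · rfl
  · exact ae_of_all _ fun w => mul_nonneg (h0 w) (hk_nonneg d ht _)
  · exact (hχc.mul ((hk_cont d t).comp (by fun_prop))).aestronglyMeasurable

lemma hk_contDiff {d : ℕ} (x : EuclideanSpace ℝ (Fin d)) (t : ℝ) :
    ContDiff ℝ (⊤ : ℕ∞) (fun w => heatKernel d t (w - x)) := by
  unfold heatKernel
  refine contDiff_const.mul (ContDiff.exp ?_)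
  refine ContDiff.div_const (ContDiff.neg ?_) _
  exact (contDiff_id.sub contDiff_const).norm_sq ℝ

lemma hk_fderiv {d : ℕ} (x : EuclideanSpace ℝ (Fin d)) (t : ℝ)
    (w e : EuclideanSpace ℝ (Fin d)) :
    fderiv ℝ (fun w => heatKernel d t (w - x)) w e =
      -(⟪w - x, e⟫ / t) * heatKernel d t (w - x) := by
  have h0 : HasFDerivAt (fun w => w - x) (ContinuousLinearMap.id ℝ (EuclideanSpace ℝ (Fin d))) w :=
    (hasFDerivAt_id w).sub_const x
  have h1 := h0.norm_sq
  have h2 := ((h1.neg.mul_const (2 * t)⁻¹).exp).const_mul ((2 * Real.pi * t) ^ (-(d : ℝ) / 2))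
  have h3 : (fun w => heatKernel d t (w - x)) = fun w =>
      (2 * Real.pi * t) ^ (-(d : ℝ) / 2) * Real.exp (-‖w - x‖ ^ 2 * (2 * t)⁻¹) := by
    funext w; simp only [heatKernel, div_eq_mul_inv]
  have h4 : fderiv ℝ (fun w => (2 * Real.pi * t) ^ (-(d : ℝ) / 2) *
    Real.exp (-‖w - x‖ ^ 2 * (2 * t)⁻¹)) w = _ := h2.fderiv
  rw [h3, h4]
  simp [heatKernel, div_eq_mul_inv]
  rw [inner_sub_left]
  ring

lemma secondPartial_mul {d : ℕ} (x : EuclideanSpace ℝ (Fin d)) (t : ℝ)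
    (χ : EuclideanSpace ℝ (Fin d) → ℝ) (hχ : ContDiff ℝ (⊤ : ℕ∞) χ) (i : Fin d)
    (w : EuclideanSpace ℝ (Fin d)) :
    secondPartial d (fun w => χ w * heatKernel d t (w - x)) i i w =
      (secondPartial d χ i i w - 2 / t * (fderiv ℝ χ w (EuclideanSpace.single i 1) * (w - x) i)
        + χ w * ((w - x) i ^ 2 / t ^ 2 - 1 / t)) * heatKernel d t (w - x) := by
  set e : EuclideanSpace ℝ (Fin d) := EuclideanSpace.single i 1 with he
  have hg : Differentiable ℝ (fun w => heatKernel d t (w - x)) :=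
    (hk_contDiff x t).differentiable (by simp)
  have hχd : Differentiable ℝ χ := hχ.differentiable (by simp)
  have hχ1 : Differentiable ℝ (fun z => fderiv ℝ χ z e) :=
    ((hχ.fderiv_right (m := 1) (by norm_cast)).differentiable (by simp)).clm_apply
      (differentiable_const e)
  have hin : ∀ z : EuclideanSpace ℝ (Fin d), ⟪z, e⟫ = z i := by
    intro z; rw [he, EuclideanSpace.inner_single_right]; simp
  have h1 : (fun z => fderiv ℝ (fun w => χ w * heatKernel d t (w - x)) z e) =
      fun z => (fderiv ℝ χ z e - χ z * (⟪z - x, e⟫ / t)) * heatKernel d t (z - x) := by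
    funext z
    rw [fderiv_fun_mul (hχd z) (hg z)]
    simp only [add_apply, smul_apply, hk_fderiv, smul_eq_mul]
    ring
  have hl : HasFDerivAt (fun z => ⟪z - x, e⟫ / t) (t⁻¹ • (innerSL ℝ e)) w := by
    have h0 : HasFDerivAt (fun z => innerSL ℝ e (z - x)) (innerSL ℝ e) w := by
      have := (innerSL ℝ e).hasFDerivAt.comp w ((hasFDerivAt_id w).sub_const x)
      rw [ContinuousLinearMap.comp_id] at this
      exact this
    have := h0.const_mul t⁻¹
    refine this.congr_of_eventuallyEq (Eventually.of_forall fun z => ?_)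
    simp only [innerSL_apply_apply]
    rw [real_inner_comm]; ring
  have h2 := (hχ1 w).hasFDerivAt.sub ((hχd w).hasFDerivAt.mul hl)
  have h3 := h2.mul (hg w).hasFDerivAt
  unfold secondPartial
  rw [← he, h1]
  have h4 := h3.fderiv
  have h5 : fderiv ℝ (fun z => (fderiv ℝ χ z e - χ z * (⟪z - x, e⟫ / t)) * heatKernel d t (z - x)) w
    = _ := h4
  rw [h5]
  have hee : ⟪e, e⟫ = 1 := by rw [hin, he]; simp
  simp only [add_apply, smul_apply, hk_fderiv, smul_eq_mul,
    sub_apply, innerSL_apply_apply, hee, Pi.sub_apply, Pi.mul_apply]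
  rw [hin]
  ring

lemma sum_secondPartial_s6 {d : ℕ} (x : EuclideanSpace ℝ (Fin d)) (t : ℝ)
    (χ : EuclideanSpace ℝ (Fin d) → ℝ) (hχ : ContDiff ℝ (⊤ : ℕ∞) χ)
    (w : EuclideanSpace ℝ (Fin d)) :
    ∑ i, secondPartial d (fun w => χ w * heatKernel d t (w - x)) i i w =
      ((∑ i, secondPartial d χ i i w) - 2 / t *
        (∑ i, fderiv ℝ χ w (EuclideanSpace.single i 1) * (w - x) i)
        + χ w * (‖w - x‖ ^ 2 / t ^ 2 - d / t)) * heatKernel d t (w - x) := by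
  simp_rw [secondPartial_mul x t χ hχ]
  rw [← Finset.sum_mul, Finset.sum_add_distrib, Finset.sum_sub_distrib, ← Finset.mul_sum,
    ← Finset.mul_sum, Finset.sum_sub_distrib, ← Finset.sum_div, EuclideanSpace.real_norm_sq_eq]
  simp [div_eq_mul_inv]

lemma hk_deriv_t {d : ℕ} (y : EuclideanSpace ℝ (Fin d)) {t : ℝ} (ht : 0 < t) :
    HasDerivAt (fun t => heatKernel d t y)
      ((‖y‖ ^ 2 / t ^ 2 - d / t) / 2 * heatKernel d t y) t := by
  unfold heatKernel
  have hpi := Real.pi_pos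
  have h1 : HasDerivAt (fun t : ℝ => 2 * Real.pi * t) (2 * Real.pi) t := by
    simpa using (hasDerivAt_id t).const_mul (2 * Real.pi)
  have h2 := h1.rpow_const (p := -(d : ℝ) / 2) (Or.inl (by positivity))
  have h3 : HasDerivAt (fun t : ℝ => -‖y‖ ^ 2 / (2 * t)) (‖y‖ ^ 2 / (2 * t ^ 2)) t := by
    have := ((hasDerivAt_inv ht.ne').const_mul (-‖y‖ ^ 2 / 2))
    refine (this.congr_of_eventuallyEq (Eventually.of_forall fun s => ?_)).congr_deriv ?_
    · simp only []; rw [div_mul_eq_div_div]; rfl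
    · field_simp
  refine (h2.mul h3.exp).congr_deriv ?_
  rw [Real.rpow_sub_one (by positivity)]
  field_simp
  ring

lemma tail_int {d : ℕ} (x : EuclideanSpace ℝ (Fin d)) (K : EuclideanSpace ℝ (Fin d) → ℝ)
    (hK : Integrable (fun w => K w * Real.exp (-(1 / 4) * ‖w - x‖ ^ 2)))
    (hz : ∀ w ∈ ball x 1, K w = 0) (k : ℕ) :
    Tendsto (fun t => (1 / t) ^ k * ∫ w, K w * heatKernel d t (w - x)) (𝓝[>] 0) (𝓝 0) := by
  have hb := (tail_tendsto d (b := 1 ^ 2 / 4) (by positivity) k).mul_const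
    (∫ w, ‖K w * Real.exp (-(1 / 4) * ‖w - x‖ ^ 2)‖)
  rw [zero_mul] at hb
  refine squeeze_zero_norm' ?_ hb
  filter_upwards [self_mem_nhdsWithin, Ioc_mem_nhdsGT (zero_lt_one' ℝ)] with t ht ht1
  have ht : 0 < t := ht
  rw [norm_mul, mul_assoc, Real.norm_of_nonneg (by positivity)]
  gcongr
  rw [← integral_const_mul]
  refine norm_integral_le_of_norm_le (hK.norm.const_mul _) (ae_of_all _ fun w => ?_)
  by_cases hw : w ∈ ball x 1
  · simp [hz w hw]
  · simp only [mem_ball, not_lt, dist_eq_norm] at hw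
    have := hk_tail d one_pos ht ht1.2 _ hw
    rw [norm_mul, norm_mul, Real.norm_of_nonneg (hk_nonneg d ht _),
      Real.norm_of_nonneg (Real.exp_pos _).le]
    refine (mul_le_mul_of_nonneg_left this (norm_nonneg (K w))).trans (le_of_eq ?_)
    ring

lemma E_tendsto {d : ℕ} (x : EuclideanSpace ℝ (Fin d)) (g : EuclideanSpace ℝ (Fin d) → ℝ)
    (hg : Integrable g) (hc : Continuous g) :
    Tendsto (fun t => ∫ w, g w * heatKernel d t (w - x)) (𝓝[>] 0) (𝓝 (g x)) := by
  have := tendsto_integral_peak_smul_of_integrable_of_tendsto (μ := volume) (x₀ := x)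
    (l := 𝓝[>] (0 : ℝ)) (φ := fun t w => heatKernel d t (w - x)) (g := g) (a := g x)
    (t := closedBall x 1) isClosed_closedBall.measurableSet (closedBall_mem_nhds x one_pos)
    (isCompact_closedBall x 1).measure_lt_top.ne ?_ ?_ (mass_tendsto x one_pos) ?_ hg hc.continuousAt
  · simpa only [smul_eq_mul, mul_comm] using this
  · filter_upwards [self_mem_nhdsWithin] with t ht w using hk_nonneg d ht _
  · intro u hu hxu
    obtain ⟨ε, hε, hball⟩ := Metric.isOpen_iff.1 hu x hxu
    rw [Metric.tendstoUniformlyOn_iff]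
    intro η hη
    filter_upwards [tail_unif' d hε (half_pos hη), self_mem_nhdsWithin] with t ht ht0 w hw
    have h1 : ε ≤ ‖w - x‖ := by
      by_contra hlt
      exact hw (hball (by rw [mem_ball, dist_eq_norm]; exact not_le.1 hlt))
    rw [Pi.zero_apply, dist_zero_left, Real.norm_of_nonneg (hk_nonneg d ht0 _)]
    linarith [ht _ h1]
  · exact Eventually.of_forall fun t => ((hk_cont d t).comp (by fun_prop)).aestronglyMeasurable

lemma E_deriv {d : ℕ} (x : EuclideanSpace ℝ (Fin d)) (g : EuclideanSpace ℝ (Fin d) → ℝ)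
    (hc : Continuous g) (hout : ∀ w, w ∉ closedBall x 2 → g w = 0) {t : ℝ} (ht : 0 < t) :
    HasDerivAt (fun t => ∫ w, g w * heatKernel d t (w - x))
      (∫ w, g w * ((‖w - x‖ ^ 2 / t ^ 2 - d / t) / 2 * heatKernel d t (w - x))) t := by
  have hpi := Real.pi_pos
  have hcs : HasCompactSupport g := HasCompactSupport.intro (isCompact_closedBall x 2) hout
  have hkc : ∀ s, Continuous fun w => heatKernel d s (w - x) :=
    fun s => (hk_cont d s).comp (by fun_prop)
  set F' : ℝ → EuclideanSpace ℝ (Fin d) → ℝ := fun s w =>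
    g w * ((‖w - x‖ ^ 2 / s ^ 2 - d / s) / 2 * heatKernel d s (w - x)) with hF'
  have hcont : ContinuousOn (fun q : ℝ × EuclideanSpace ℝ (Fin d) => F' q.1 q.2)
      (Set.Icc (t / 2) (2 * t) ×ˢ closedBall x 2) := by
    have hne : ∀ q ∈ (Set.Icc (t / 2) (2 * t) ×ˢ closedBall x 2), 0 < q.1 := by
      intro q hq
      have := hq.1.1
      linarith
    simp only [hF', heatKernel]
    refine ContinuousOn.mul (by fun_prop) (ContinuousOn.mul (ContinuousOn.div_const
      (ContinuousOn.sub (ContinuousOn.div (by fun_prop) (by fun_prop) ?_)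
      (ContinuousOn.div (by fun_prop) (by fun_prop) ?_)) _) (ContinuousOn.mul
      (ContinuousOn.rpow_const (by fun_prop) ?_) (ContinuousOn.rexp
      (ContinuousOn.div (by fun_prop) (by fun_prop) ?_))))
    · intro q hq; have := hne q hq; positivity
    · intro q hq; have := hne q hq; positivity
    · intro q hq; have := hne q hq; left; positivity
    · intro q hq; have := hne q hq; positivity
  obtain ⟨C, hC⟩ := (isCompact_Icc.prod (isCompact_closedBall x 2)).exists_bound_of_continuousOn hcont
  refine (hasDerivAt_integral_of_dominated_loc_of_deriv_le (F' := F')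
    (bound := (closedBall x 2).indicator fun _ => C)
    (Icc_mem_nhds (a := t / 2) (b := 2 * t) (by linarith) (by linarith))
    (Eventually.of_forall fun s => (hc.mul (hkc s)).aestronglyMeasurable)
    ((hc.mul (hkc t)).integrable_of_hasCompactSupport hcs.mul_right)
    ?_ ?_ ?_ ?_).2
  · refine Continuous.aestronglyMeasurable ?_
    exact hc.mul (Continuous.mul (by fun_prop) (hkc t))
  · refine ae_of_all _ fun w s hs => ?_
    by_cases hw : w ∈ closedBall x 2
    · rw [Set.indicator_of_mem hw]
      exact hC (s, w) ⟨hs, hw⟩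
    · rw [Set.indicator_of_notMem hw]
      simp [hF', hout w hw]
  · rw [integrable_indicator_iff isClosed_closedBall.measurableSet]
    exact integrableOn_const (isCompact_closedBall x 2).measure_lt_top.ne
  · refine ae_of_all _ fun w s hs => ?_
    exact (hk_deriv_t (w - x) (by have := hs.1; linarith)).const_mul (g w)

lemma secondPartial_cont {d : ℕ} (φ : EuclideanSpace ℝ (Fin d) → ℝ)
    (hφ : ContDiff ℝ (⊤ : ℕ∞) φ) (i j : Fin d) : Continuous (secondPartial d φ i j) := by
  unfold secondPartial
  have h1 : ContDiff ℝ 1 (fun z => fderiv ℝ φ z (EuclideanSpace.single j 1)) :=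
    (hφ.fderiv_right (m := 1) (by norm_cast)).clm_apply contDiff_const
  exact (h1.continuous_fderiv (by simp)).clm_apply continuous_const

lemma secondPartial_supp {d : ℕ} (φ : EuclideanSpace ℝ (Fin d) → ℝ)
    (hφ : HasCompactSupport φ) (i j : Fin d) : HasCompactSupport (secondPartial d φ i j) :=
  (hφ.fderiv_apply ℝ _).fderiv_apply ℝ _

lemma growth_bound {d : ℕ} (f : EuclideanSpace ℝ (Fin d) → ℝ)
    (A B : ℝ) (hgrowth : ∀ y, |f y| ≤ A * ‖y‖ + B) (x : EuclideanSpace ℝ (Fin d)) :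
    ∃ C, 0 ≤ C ∧ ∀ w, |f w| ≤ C * Real.exp ((1 / 8) * ‖w - x‖ ^ 2) := by
  refine ⟨|A| * ‖x‖ + |B| + 8 * |A|, by positivity, fun w => ?_⟩
  have h1 : ‖w‖ ≤ ‖x‖ + ‖w - x‖ := by
    have := norm_add_le x (w - x); simpa using this
  have h2 : 1 + (1 / 8) * ‖w - x‖ ^ 2 ≤ Real.exp ((1 / 8) * ‖w - x‖ ^ 2) := by
    rw [add_comm]; exact Real.add_one_le_exp _
  set E := Real.exp ((1 / 8) * ‖w - x‖ ^ 2)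
  have h3 : 1 ≤ E := by nlinarith [sq_nonneg ‖w - x‖]
  have h4 : ‖w - x‖ ≤ 8 * E := by nlinarith [sq_nonneg (‖w - x‖ - 1 / 2)]
  have h5 : |f w| ≤ |A| * (‖x‖ + ‖w - x‖) + |B| := by
    refine (hgrowth w).trans ?_
    have : A * ‖w‖ ≤ |A| * (‖x‖ + ‖w - x‖) := by
      refine (mul_le_mul_of_nonneg_right (le_abs_self A) (norm_nonneg w)).trans ?_
      gcongr
    linarith [le_abs_self B]
  have h6 : |A| * ‖w - x‖ ≤ |A| * (8 * E) := by gcongr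
  have h7 : (|A| * ‖x‖ + |B|) * 1 ≤ (|A| * ‖x‖ + |B|) * E := by gcongr
  linarith

lemma f_exp_integrable {d : ℕ} (f : EuclideanSpace ℝ (Fin d) → ℝ) (hfc : Continuous f)
    (A B : ℝ) (hgrowth : ∀ y, |f y| ≤ A * ‖y‖ + B) (x : EuclideanSpace ℝ (Fin d)) :
    Integrable (fun w => f w * Real.exp (-(1 / 4) * ‖w - x‖ ^ 2)) := by
  obtain ⟨C, hC0, hC⟩ := growth_bound f A B hgrowth x
  have hg := ((gauss_integrable d (b := 1 / 8) (by norm_num)).comp_sub_right x).const_mul C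
  refine hg.mono' (Continuous.aestronglyMeasurable (by fun_prop)) (ae_of_all _ fun w => ?_)
  rw [norm_mul, Real.norm_eq_abs, Real.norm_of_nonneg (Real.exp_pos _).le]
  refine (mul_le_mul_of_nonneg_right (hC w) (Real.exp_pos _).le).trans (le_of_eq ?_)
  rw [mul_assoc, ← Real.exp_add]
  congr 2; ring

lemma f_hk_integrable {d : ℕ} (f : EuclideanSpace ℝ (Fin d) → ℝ) (hfc : Continuous f)
    (A B : ℝ) (hgrowth : ∀ y, |f y| ≤ A * ‖y‖ + B) (x : EuclideanSpace ℝ (Fin d))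
    {t : ℝ} (ht : 0 < t) (ht1 : t ≤ 1) :
    Integrable (fun w => f w * heatKernel d t (w - x)) := by
  have hpi := Real.pi_pos
  have hg := (f_exp_integrable f hfc A B hgrowth x).norm.const_mul
    ((2 * Real.pi * t) ^ (-(d : ℝ) / 2))
  refine hg.mono' (hfc.mul ((hk_cont d t).comp (by fun_prop))).aestronglyMeasurable
    (ae_of_all _ fun w => ?_)
  rw [norm_mul, norm_mul, Real.norm_of_nonneg (hk_nonneg d ht _),
    Real.norm_of_nonneg (Real.exp_pos _).le, mul_left_comm]
  unfold heatKernel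
  gcongr
  rw [neg_div, neg_mul, neg_le_neg_iff, le_div_iff₀ (by positivity)]
  nlinarith [sq_nonneg ‖w - x‖]

lemma inner_hk_integral {d : ℕ} (v : EuclideanSpace ℝ (Fin d)) (t : ℝ) :
    ∫ y, ⟪v, y⟫ * heatKernel d t y = 0 := by
  have h := integral_neg_eq_self (fun y : EuclideanSpace ℝ (Fin d) => ⟪v, y⟫ * heatKernel d t y)
    volume
  have h2 : ∀ y : EuclideanSpace ℝ (Fin d), ⟪v, -y⟫ * heatKernel d t (-y) =
      -(⟪v, y⟫ * heatKernel d t y) := by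
    intro y; simp [heatKernel, inner_neg_right]
  simp_rw [h2] at h
  rw [integral_neg] at h
  linarith

lemma smooth_part {d : ℕ} (f : EuclideanSpace ℝ (Fin d) → ℝ) (hfc : Continuous f)
    (μp μn : Fin d → Fin d → Measure (EuclideanSpace ℝ (Fin d)))
    (hμ : IsSecondDerivMeasures d f μp μn) (x : EuclideanSpace ℝ (Fin d))
    (h1 : ∀ i, Tendsto (fun r => μp i i (closedBall x r) / volume (closedBall x r)) (𝓝[>] 0)
      (𝓝 ((μp i i).rnDeriv volume x)))
    (h2 : ∀ i, Tendsto (fun r => μn i i (closedBall x r) / volume (closedBall x r)) (𝓝[>] 0)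
      (𝓝 ((μn i i).rnDeriv volume x)))
    (h3 : ∀ i, (μp i i).rnDeriv volume x ≠ ∞) (h4 : ∀ i, (μn i i).rnDeriv volume x ≠ ∞)
    (χ : ContDiffBump x) (hr1 : χ.rIn = 1) (hr2 : χ.rOut = 2) :
    Tendsto (fun t => (1 / t) * ((∫ w, f w * χ w * heatKernel d t (w - x)) - f x)) (𝓝[>] 0)
      (𝓝 ((1 / 2) * Matrix.trace (densityMatrix d μp μn x))) := by
  obtain ⟨hlp, hln, hμ⟩ := hμ
  have hχ : ContDiff ℝ (⊤ : ℕ∞) χ := χ.contDiff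
  have hχc : Continuous χ := χ.continuous
  have hin : ∀ w ∈ closedBall x 1, χ w = 1 := fun w hw =>
    χ.one_of_mem_closedBall (by rwa [hr1])
  have hout : ∀ w, w ∉ closedBall x 2 → χ w = 0 := fun w hw =>
    χ.zero_of_le_dist (by rw [hr2]; simp only [mem_closedBall, not_le] at hw; exact hw.le)
  have hcs : HasCompactSupport χ := χ.hasCompactSupport
  have hkc : ∀ s, Continuous fun w => heatKernel d s (w - x) :=
    fun s => (hk_cont d s).comp (by fun_prop)
  set E : ℝ → ℝ := fun t => ∫ w, f w * χ w * heatKernel d t (w - x) with hE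
  have hElim : Tendsto E (𝓝[>] 0) (𝓝 (f x)) := by
    have := E_tendsto x (fun w => f w * χ w)
      ((hfc.mul hχc).integrable_of_hasCompactSupport hcs.mul_left) (hfc.mul hχc)
    simpa [hin x (mem_closedBall_self zero_le_one)] using this
  set K1 : EuclideanSpace ℝ (Fin d) → ℝ := fun w => ∑ i, secondPartial d χ i i w with hK1
  set K2 : EuclideanSpace ℝ (Fin d) → ℝ := fun w =>
    ∑ i, fderiv ℝ χ w (EuclideanSpace.single i 1) * (w - x) i with hK2
  have hK1c : Continuous K1 := continuous_finsetSum _ fun i _ => secondPartial_cont χ hχ i i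
  have hK2c : Continuous K2 := by
    refine continuous_finsetSum _ fun i _ => ?_
    exact ((hχ.continuous_fderiv (by simp)).clm_apply continuous_const).mul (by fun_prop)
  have hK1s : HasCompactSupport K1 := by
    refine HasCompactSupport.intro hcs fun w hw => Finset.sum_eq_zero fun i _ => ?_
    have ha := (tsupport_fderiv_apply_subset ℝ (f := fun z => fderiv ℝ χ z (EuclideanSpace.single i 1)) 
      (EuclideanSpace.single i 1)).trans (tsupport_fderiv_apply_subset ℝ (f := χ) (EuclideanSpace.single i 1))
    exact image_eq_zero_of_notMem_tsupport fun h => hw (ha h)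
  have hK2s : HasCompactSupport K2 := by
    refine HasCompactSupport.intro hcs fun w hw => Finset.sum_eq_zero fun i _ => ?_
    have ha := (tsupport_fderiv_apply_subset ℝ (f := χ) (EuclideanSpace.single i 1))
    have hb : fderiv ℝ χ w (EuclideanSpace.single i 1) = 0 :=
      image_eq_zero_of_notMem_tsupport (f := fun w => fderiv ℝ χ w (EuclideanSpace.single i 1))
        fun h => hw (ha h)
    rw [hb, zero_mul]
  have hχ1 : ∀ w ∈ ball x 1, fderiv ℝ χ w = 0 := by
    intro w hw
    have : (χ : EuclideanSpace ℝ (Fin d) → ℝ) =ᶠ[𝓝 w] fun _ => 1 := by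
      filter_upwards [isOpen_ball.mem_nhds hw] with z hz using hin z (ball_subset_closedBall hz)
    rw [this.fderiv_eq]; simp
  have hK1z : ∀ w ∈ ball x 1, K1 w = 0 := by
    intro w hw
    refine Finset.sum_eq_zero fun i _ => ?_
    unfold secondPartial
    have : (fun z => fderiv ℝ χ z (EuclideanSpace.single i 1)) =ᶠ[𝓝 w] fun _ => 0 := by
      filter_upwards [isOpen_ball.mem_nhds hw] with z hz
      rw [hχ1 z hz]; rfl
    rw [this.fderiv_eq]; simp
  have hK2z : ∀ w ∈ ball x 1, K2 w = 0 := by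
    intro w hw
    refine Finset.sum_eq_zero fun i _ => ?_
    rw [hχ1 w hw]; simp
  have hR1 := tail_int x (fun w => f w * K1 w)
    (((hfc.mul hK1c).mul (by fun_prop)).integrable_of_hasCompactSupport
      (hK1s.mul_left.mul_right)) (fun w hw => by rw [hK1z w hw, mul_zero]) 0
  have hR2 := tail_int x (fun w => f w * K2 w)
    (((hfc.mul hK2c).mul (by fun_prop)).integrable_of_hasCompactSupport
      (hK2s.mul_left.mul_right)) (fun w hw => by rw [hK2z w hw, mul_zero]) 1
  have hderiv : ∀ t, 0 < t → HasDerivAt E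
      (∫ w, f w * χ w * ((‖w - x‖ ^ 2 / t ^ 2 - d / t) / 2 * heatKernel d t (w - x))) t :=
    fun t ht => E_deriv x (fun w => f w * χ w) (hfc.mul hχc)
      (fun w hw => by rw [hout w hw, mul_zero]) ht
  have hform : ∀ t, 0 < t →
      ∫ w, f w * χ w * ((‖w - x‖ ^ 2 / t ^ 2 - d / t) / 2 * heatKernel d t (w - x)) =
      (1 / 2) * (∑ i, ((∫ w, χ w * heatKernel d t (w - x) ∂(μp i i)) -
        ∫ w, χ w * heatKernel d t (w - x) ∂(μn i i))) -
      (1 / 2) * ((1 / t) ^ 0 * ∫ w, f w * K1 w * heatKernel d t (w - x)) +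
      (1 / t) ^ 1 * ∫ w, f w * K2 w * heatKernel d t (w - x) := by
    intro t ht
    have hψ : ContDiff ℝ (⊤ : ℕ∞) (fun w => χ w * heatKernel d t (w - x)) :=
      hχ.mul (hk_contDiff x t)
    have hψs : HasCompactSupport (fun w => χ w * heatKernel d t (w - x)) := hcs.mul_right
    have hi : ∀ i ∈ Finset.univ, Integrable (fun w => f w *
        secondPartial d (fun w => χ w * heatKernel d t (w - x)) i i w) := fun i _ =>
      (hfc.mul (secondPartial_cont _ hψ i i)).integrable_of_hasCompactSupport
        (secondPartial_supp _ hψs i i).mul_left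
    have hs : ∑ i, ((∫ w, χ w * heatKernel d t (w - x) ∂(μp i i)) -
        ∫ w, χ w * heatKernel d t (w - x) ∂(μn i i)) =
        ∫ w, ∑ i, f w * secondPartial d (fun w => χ w * heatKernel d t (w - x)) i i w := by
      rw [integral_finsetSum _ hi]
      exact Finset.sum_congr rfl fun i _ => hμ i i _ hψ hψs
    have hsi := integrable_finsetSum _ hi
    have hi1 : Integrable (fun w => f w * K1 w * heatKernel d t (w - x)) :=
      ((hfc.mul hK1c).mul (hkc t)).integrable_of_hasCompactSupport (hK1s.mul_left.mul_right)
    have hi2 : Integrable (fun w => f w * K2 w * heatKernel d t (w - x)) :=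
      ((hfc.mul hK2c).mul (hkc t)).integrable_of_hasCompactSupport (hK2s.mul_left.mul_right)
    have hd : Integrable (fun w => 1 / 2 * ∑ i, f w *
        secondPartial d (fun w => χ w * heatKernel d t (w - x)) i i w -
        1 / 2 * ((1 / t) ^ 0 * (f w * K1 w * heatKernel d t (w - x)))) :=
      (hsi.const_mul _).sub ((hi1.const_mul _).const_mul _)
    rw [hs, ← integral_const_mul, ← integral_const_mul, ← integral_const_mul, ← integral_const_mul,
      ← integral_sub (hsi.const_mul _) ((hi1.const_mul _).const_mul _),
      ← integral_add hd (hi2.const_mul _)]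
    refine integral_congr_ae (ae_of_all _ fun w => ?_)
    simp only []
    rw [← Finset.mul_sum, sum_secondPartial_s6 x t χ hχ w]
    simp only [hK1, hK2]
    ring
  have hdlim : Tendsto (fun t => deriv E t) (𝓝[>] 0)
      (𝓝 ((1 / 2) * Matrix.trace (densityMatrix d μp μn x))) := by
    have hsum : Tendsto (fun t => ∑ i, ((∫ w, χ w * heatKernel d t (w - x) ∂(μp i i)) -
        ∫ w, χ w * heatKernel d t (w - x) ∂(μn i i))) (𝓝[>] 0)
        (𝓝 (∑ i, (((μp i i).rnDeriv volume x).toReal - ((μn i i).rnDeriv volume x).toReal))) := by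
      refine tendsto_finsetSum _ fun i _ => ?_
      have := hlp i i
      have := hln i i
      exact (gauss_leb' x (μp i i) _ (h3 i) (h1 i) χ hχc (fun w => χ.nonneg) (fun w => χ.le_one)
        hin hout).sub (gauss_leb' x (μn i i) _ (h4 i) (h2 i) χ hχc (fun w => χ.nonneg)
        (fun w => χ.le_one) hin hout)
    have htot := ((hsum.const_mul (1 / 2)).sub (hR1.const_mul (1 / 2))).add hR2
    rw [mul_zero, sub_zero, add_zero] at htot
    have htr : Matrix.trace (densityMatrix d μp μn x) =
        ∑ i, (((μp i i).rnDeriv volume x).toReal - ((μn i i).rnDeriv volume x).toReal) := rfl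
    rw [htr]
    refine htot.congr' ?_
    filter_upwards [self_mem_nhdsWithin] with t ht
    rw [(hderiv t ht).deriv, hform t ht]
  -- conclude
  set F : ℝ → ℝ := Function.update E 0 (f x) with hF
  have hFE : ∀ t, 0 < t → F =ᶠ[𝓝 t] E := fun t ht => by
    filter_upwards [isOpen_ne.mem_nhds ht.ne'] with s hs
    exact Function.update_of_ne hs _ _
  have hFd : HasDerivWithinAt F ((1 / 2) * Matrix.trace (densityMatrix d μp μn x)) (Set.Ici 0) 0 := by
    refine hasDerivWithinAt_Ici_of_tendsto_deriv (s := Set.Ioi 0) ?_ ?_ self_mem_nhdsWithin ?_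
    · intro t ht
      exact ((hderiv t ht).congr_of_eventuallyEq (hFE t ht)).differentiableAt.differentiableWithinAt
    · unfold ContinuousWithinAt
      rw [hF, Function.update_self]
      refine hElim.congr' ?_
      filter_upwards [self_mem_nhdsWithin] with t ht
      exact (Function.update_of_ne (ne_of_gt ht) _ _).symm
    · refine hdlim.congr' ?_
      filter_upwards [self_mem_nhdsWithin] with t ht
      exact (hFE t ht).deriv_eq.symm
  have hsl := (hasDerivWithinAt_iff_tendsto_slope.1 hFd)
  rw [Set.Ici_sdiff_left] at hsl
  refine hsl.congr' ?_
  filter_upwards [self_mem_nhdsWithin] with t ht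
  rw [slope_def_field, hF, Function.update_self, Function.update_of_ne (ne_of_gt ht), sub_zero]
  ring

theorem first_order_increment_average_tendsto_half_trace (d : ℕ)
    (f : EuclideanSpace ℝ (Fin d) → ℝ) (hf : ConvexOn ℝ Set.univ f)
    (A B : ℝ) (hgrowth : ∀ y, |f y| ≤ A * ‖y‖ + B)
    (p : EuclideanSpace ℝ (Fin d) → EuclideanSpace ℝ (Fin d))
    (hp : ∀ x y, f x + ⟪p x, y - x⟫ ≤ f y)
    (μp μn : Fin d → Fin d → Measure (EuclideanSpace ℝ (Fin d)))
    (hμ : IsSecondDerivMeasures d f μp μn) :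
    ∀ᵐ x ∂(volume : Measure (EuclideanSpace ℝ (Fin d))),
      Filter.Tendsto
        (fun t : ℝ => (1 / t) * ∫ y, |f (x + y) - f x - ⟪p x, y⟫| * heatKernel d t y)
        (nhdsWithin 0 (Set.Ioi 0))
        (nhds ((1 / 2) * Matrix.trace (densityMatrix d μp μn x))) := by
  have hfc : Continuous f := by
    have := hf.continuousOn isOpen_univ
    exact continuousOn_univ.1 this
  have hlp := hμ.1
  have hln := hμ.2.1
  have a1 : ∀ᵐ x ∂(volume : Measure (EuclideanSpace ℝ (Fin d))), ∀ i,
      Tendsto (fun r => μp i i (closedBall x r) / volume (closedBall x r)) (𝓝[>] 0)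
      (𝓝 ((μp i i).rnDeriv volume x)) := ae_all_iff.2 fun i =>
    Besicovitch.ae_tendsto_rnDeriv (μp i i) volume
  have a2 : ∀ᵐ x ∂(volume : Measure (EuclideanSpace ℝ (Fin d))), ∀ i,
      Tendsto (fun r => μn i i (closedBall x r) / volume (closedBall x r)) (𝓝[>] 0)
      (𝓝 ((μn i i).rnDeriv volume x)) := ae_all_iff.2 fun i =>
    Besicovitch.ae_tendsto_rnDeriv (μn i i) volume
  have a3 : ∀ᵐ x ∂(volume : Measure (EuclideanSpace ℝ (Fin d))), ∀ i,
      (μp i i).rnDeriv volume x ≠ ∞ := ae_all_iff.2 fun i => Measure.rnDeriv_ne_top _ _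
  have a4 : ∀ᵐ x ∂(volume : Measure (EuclideanSpace ℝ (Fin d))), ∀ i,
      (μn i i).rnDeriv volume x ≠ ∞ := ae_all_iff.2 fun i => Measure.rnDeriv_ne_top _ _
  filter_upwards [a1, a2, a3, a4] with x h1 h2 h3 h4
  let χ : ContDiffBump x := ⟨1, 2, one_pos, one_lt_two⟩
  have hs := smooth_part f hfc μp μn hμ x h1 h2 h3 h4 χ rfl rfl
  have hχc : Continuous χ := χ.continuous
  have ht := tail_int x (fun w => f w * (1 - χ w)) (by
    refine (f_exp_integrable f hfc A B hgrowth x).mono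
      (Continuous.aestronglyMeasurable (by fun_prop)) (ae_of_all _ fun w => ?_)
    rw [norm_mul, norm_mul, norm_mul]
    have h0 := χ.nonneg (x := w)
    have h1 := χ.le_one (x := w)
    have : ‖1 - χ w‖ ≤ 1 := by
      rw [Real.norm_of_nonneg (by linarith)]; linarith
    exact mul_le_mul_of_nonneg_right (mul_le_of_le_one_right (norm_nonneg _) this) (norm_nonneg _))
    (fun w hw => by rw [χ.one_of_mem_closedBall (ball_subset_closedBall hw)]; simp) 1
  have hsum := hs.add ht
  rw [add_zero] at hsum
  refine hsum.congr' ?_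
  filter_upwards [self_mem_nhdsWithin, Ioc_mem_nhdsGT (zero_lt_one' ℝ)] with t ht0 ht1
  have ht0 : 0 < t := ht0
  have hfi := f_hk_integrable f hfc A B hgrowth x ht0 ht1.2
  have hi1 : Integrable (fun w => f w * χ w * heatKernel d t (w - x)) :=
    ((hfc.mul hχc).mul ((hk_cont d t).comp (by fun_prop))).integrable_of_hasCompactSupport
      (χ.hasCompactSupport.mul_left.mul_right)
  have hi2 : Integrable (fun w => f w * (1 - χ w) * heatKernel d t (w - x)) := by
    refine (hfi.sub hi1).congr (ae_of_all _ fun w => ?_)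
    simp only [Pi.sub_apply]; ring
  have hsplit : (∫ w, f w * χ w * heatKernel d t (w - x)) +
      ∫ w, f w * (1 - χ w) * heatKernel d t (w - x) = ∫ w, f w * heatKernel d t (w - x) := by
    rw [← integral_add hi1 hi2]
    exact integral_congr_ae (ae_of_all _ fun w => by simp only []; ring)
  have htr : ∫ w, f w * heatKernel d t (w - x) = ∫ y, f (x + y) * heatKernel d t y := by
    rw [← integral_add_left_eq_self _ x]
    simp
  have hj1 : Integrable (fun y => f (x + y) * heatKernel d t y) := by
    have := hfi.comp_add_left x
    simpa using this
  have hj2 : Integrable (fun y => f x * heatKernel d t y) := (hk_integrable d ht0).const_mul _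
  have hj3 : Integrable (fun y => ⟪p x, y⟫ * heatKernel d t y) := by
    have := f_hk_integrable (fun y => ⟪p x, y⟫) (by fun_prop) ‖p x‖ 0 (fun y => by
      rw [add_zero]; exact abs_real_inner_le_norm _ _) 0 ht0 ht1.2
    simpa using this
  have hmain : ∫ y, |f (x + y) - f x - ⟪p x, y⟫| * heatKernel d t y =
      (∫ y, f (x + y) * heatKernel d t y) - f x := by
    calc ∫ y, |f (x + y) - f x - ⟪p x, y⟫| * heatKernel d t y
        = ∫ y, (f (x + y) * heatKernel d t y - f x * heatKernel d t y -
          ⟪p x, y⟫ * heatKernel d t y) := by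
          refine integral_congr_ae (ae_of_all _ fun y => ?_)
          have := hp x (x + y)
          rw [add_sub_cancel_left] at this
          simp only []
          rw [abs_of_nonneg (by linarith)]
          ring
      _ = _ := by
          have hj12 : Integrable (fun y => f (x + y) * heatKernel d t y - f x * heatKernel d t y) :=
            hj1.sub hj2
          rw [integral_sub hj12 hj3, integral_sub hj1 hj2, inner_hk_integral,
            integral_const_mul, hk_integral d ht0]
          ring
  rw [hmain, ← htr, ← hsplit]
  ring
end
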